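/- The following are equivalent: (a) U is not the only copy for G; (b) the set of copies has no isolated point in the powerset topology, i.e. for every copy C and all finite sets F ⊆ C and E ⊆ U \ C there exists a copy C' ≠ C with F ⊆ C' and C' ∩ E = ∅. -/

import Mathlib

/-- `f` is adherent to the subgroup `G` of permutations of `U`:
for every finite set `F` there is `g ∈ G` agreeing with `f` on `F`. -/
def IsAdherent {U : Type*} (G : Subgroup (Equiv.Perm U)) (f : U → U) : Prop :=
  ∀ F : Finset U, ∃ g ∈ G, ∀ x ∈ F, f x = g x

/-- `C` is a copy for the group `G`: the range of a function adherent to `G`. -/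
def IsCopy {U : Type*} (G : Subgroup (Equiv.Perm U)) (C : Set U) : Prop :=
  ∃ f : U → U, IsAdherent G f ∧ Set.range f = C

/-!
If `f` is adherent and `D` is a copy, then `f '' D` is a copy; as `f` is injective, it is a proper
subset of `range f` whenever `D ≠ U`, so it avoids whatever `range f` avoids. To have it contain a
finite set `F ⊆ range f`, take `D` to contain the finite set `K = f ⁻¹' F`. Such a `D` exists once
there is a proper copy `range h`: choose `g ∈ G` agreeing with `h` on `K`; then `g⁻¹ ∘ h` fixes `K`
pointwise, and its range is a proper copy containing `K`.
-/

section

variable {U : Type*} {G : Subgroup (Equiv.Perm U)} {f h : U → U} {C D F K : Set U}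

theorem IsAdherent.of_mem {g : Equiv.Perm U} (hg : g ∈ G) : IsAdherent G g :=
  fun _ => ⟨g, hg, fun _ _ => rfl⟩

theorem IsAdherent.comp (hf : IsAdherent G f) (hh : IsAdherent G h) : IsAdherent G (f ∘ h) := by
  classical
  intro A
  obtain ⟨a, ha, h_eq_a⟩ := hh A
  obtain ⟨b, hb, f_eq_b⟩ := hf (A.image h)
  refine ⟨b * a, G.mul_mem hb ha, fun x hx => ?_⟩
  calc f (h x) = b (h x) := f_eq_b _ (Finset.mem_image_of_mem h hx)
    _ = b (a x) := by rw [h_eq_a x hx]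

theorem IsAdherent.injective (hf : IsAdherent G f) : Function.Injective f := by
  classical
  intro x y hxy
  obtain ⟨g, -, f_eq_g⟩ := hf {x, y}
  apply g.injective
  calc g x = f x := (f_eq_g x (by simp)).symm
    _ = f y := hxy
    _ = g y := f_eq_g y (by simp)

theorem isCopy_univ (G : Subgroup (Equiv.Perm U)) : IsCopy G Set.univ :=
  ⟨_, .of_mem G.one_mem, (1 : Equiv.Perm U).range_eq_univ⟩

theorem IsCopy.image (hC : IsCopy G C) (hf : IsAdherent G f) : IsCopy G (f '' C) := by
  obtain ⟨h, hh, rfl⟩ := hC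
  exact ⟨f ∘ h, hf.comp hh, Set.range_comp f h⟩

theorem IsCopy.exists_superset_ne_univ (hC : IsCopy G C) (hC_ne : C ≠ Set.univ) (hK : K.Finite) :
    ∃ D, IsCopy G D ∧ D ≠ Set.univ ∧ K ⊆ D := by
  obtain ⟨h, hh, rfl⟩ := hC
  obtain ⟨g, hg, h_eq_g⟩ := hh hK.toFinset
  refine ⟨g ⁻¹' Set.range h, ?_, ?_, fun x hx => ⟨x, h_eq_g x (hK.mem_toFinset.mpr hx)⟩⟩
  · rw [← g.image_symm_eq_preimage]
    exact IsCopy.image ⟨h, hh, rfl⟩ (.of_mem (G.inv_mem hg))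
  · rwa [Ne, Set.preimage_eq_univ_iff, g.range_eq_univ, Set.univ_subset_iff]

theorem IsCopy.exists_ssubset (hC : IsCopy G C) (hC_ne : C ≠ Set.univ) (hD : IsCopy G D)
    (hF : F.Finite) (hFD : F ⊆ D) : ∃ C', IsCopy G C' ∧ C' ⊂ D ∧ F ⊆ C' := by
  obtain ⟨f, hf, rfl⟩ := hD
  obtain ⟨B, hB, hB_ne, preimage_subset⟩ :=
    hC.exists_superset_ne_univ hC_ne (hF.preimage hf.injective.injOn)
  refine ⟨f '' B, hB.image hf, ?_, ?_⟩
  · rw [← Set.image_univ]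
    exact hf.injective.image_strictMono (Set.ssubset_univ_iff.mpr hB_ne)
  · calc F = f '' (f ⁻¹' F) := (Set.image_preimage_eq_of_subset hFD).symm
      _ ⊆ f '' B := Set.image_mono preimage_subset

theorem no_isolated_point_iff_general (G : Subgroup (Equiv.Perm U)) :
    (∃ C : Set U, IsCopy G C ∧ C ≠ Set.univ) ↔
      (∀ C : Set U, IsCopy G C → ∀ F E : Finset U, ↑F ⊆ C → ↑E ⊆ Cᶜ →
        ∃ C' : Set U, IsCopy G C' ∧ C' ≠ C ∧ ↑F ⊆ C' ∧ C' ∩ ↑E = ∅) := by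
  constructor
  · rintro ⟨D, hD, hD_ne⟩ C hC F E hF hE
    obtain ⟨C', hC', C'_ssubset, F_subset⟩ := hD.exists_ssubset hD_ne hC F.finite_toSet hF
    have C'_disjoint_E : Disjoint C' ↑E :=
      (Set.subset_compl_iff_disjoint_left.mp hE).mono_left C'_ssubset.subset
    exact ⟨C', hC', C'_ssubset.ne, F_subset, C'_disjoint_E.inter_eq⟩
  · intro no_isolated
    obtain ⟨C, hC, hC_ne, -, -⟩ := no_isolated Set.univ (isCopy_univ G) ∅ ∅ (by simp) (by simp)
    exact ⟨C, hC, hC_ne⟩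

end

/-- Theorem: `U` is not the only copy for `G` iff the set of copies has no isolated point
in the powerset topology: for every copy `C` and finite sets `F ⊆ C`, `E` disjoint from
`C`, there is a copy `C' ≠ C` with `F ⊆ C'` and `C' ∩ E = ∅`. -/
theorem no_isolated_point_iff {U : Type*} [Countable U] [Infinite U]
    (G : Subgroup (Equiv.Perm U)) :
    (∃ C : Set U, IsCopy G C ∧ C ≠ Set.univ) ↔
      (∀ C : Set U, IsCopy G C → ∀ F E : Finset U, ↑F ⊆ C → ↑E ⊆ Cᶜ →
        ∃ C' : Set U, IsCopy G C' ∧ C' ≠ C ∧ ↑F ⊆ C' ∧ C' ∩ ↑E = ∅) :=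
  no_isolated_point_iff_general G
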